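/- Let G be a connected graph of order n with σ_2 ≥ n − k + 1 for some positive integer k. Then G has a spanning k-ended tree. (Corollary 7) -/

import Mathlib

open SimpleGraph

variable {V : Type*}

/-- A set of vertices is independent in `G`. -/
def IsIndSet (G : SimpleGraph V) (s : Set V) : Prop :=
  ∀ ⦃u⦄, u ∈ s → ∀ ⦃v⦄, v ∈ s → ¬ G.Adj u v

/-- The number of end-vertices (vertices of degree one) of a subgraph `H`. -/
noncomputable def endVertexCount {G : SimpleGraph V} (H : G.Subgraph) : ℕ :=
  {v : V | v ∈ H.verts ∧ (H.neighborSet v).ncard = 1}.ncard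

/-- `H` is a cycle; a single vertex and a single edge are regarded as
simple cycles of orders 1 and 2, respectively. -/
def IsCycleSubgraph {G : SimpleGraph V} (H : G.Subgraph) : Prop :=
  H.Connected ∧ (H.verts.ncard ≤ 2 ∨ ∀ v ∈ H.verts, (H.neighborSet v).ncard = 2)

/-- `H` is a `k`-ended tree in `G`: a tree with at most `k` end-vertices (leaves);
a cycle is regarded as a 1-ended tree. -/
def IsKEndedTree (G : SimpleGraph V) (k : ℕ) (H : G.Subgraph) : Prop :=
  (H.coe.IsTree ∧ endVertexCount H ≤ k) ∨ (1 ≤ k ∧ IsCycleSubgraph H)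

/-- `t k`: the order of a largest `k`-ended tree in `G`. -/
noncomputable def maxKEndedOrder (G : SimpleGraph V) (k : ℕ) : ℕ :=
  sSup {n | ∃ H : G.Subgraph, IsKEndedTree G k H ∧ H.verts.ncard = n}

/-- `σ m`: the minimum degree sum over independent sets of `m` vertices of `G`,
and `+∞` if the independence number of `G` is less than `m`. -/
noncomputable def minDegreeSum (G : SimpleGraph V) [Fintype V] [DecidableRel G.Adj]
    (m : ℕ) : ℕ∞ :=
  ⨅ s ∈ {s : Finset V | s.card = m ∧ IsIndSet G ↑s}, (∑ v ∈ s, G.degree v : ℕ∞)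

/-!
A spanning tree containing a path with `m` edges has at most `n - m + 1` leaves, because the
`m - 1` interior vertices of the path are not leaves. So a longest path `p` with `m > n - k` edges
suffices. If `m ≤ n - k`, the hypothesis on `σ_2` gives the ends of `p`, when nonadjacent, a degree
sum larger than `m`, while all their neighbours lie on `p`; Ore's crossing argument then turns `p`
into a cycle on the same vertices. A vertex off this cycle would yield, by connectedness, a path
longer than `p`, so the cycle is spanning.
-/

theorem exists_adj_mem_notMem_of_preconnected {G : SimpleGraph V} (hG : G.Preconnected)
    {s : Set V} {x y : V} (hx : x ∈ s) (hy : y ∉ s) : ∃ a ∈ s, ∃ b ∉ s, G.Adj a b := by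
  obtain ⟨q⟩ := hG x y
  obtain ⟨d, -, hfst, hsnd⟩ := q.exists_boundary_dart s hx hy
  exact ⟨d.fst, hfst, d.snd, hsnd, d.adj⟩

/-- A longest path of `G`: no path of `G`, whatever its ends, has more edges. -/
structure IsLongestPath {G : SimpleGraph V} {u v : V} (p : G.Walk u v) : Prop where
  isPath : p.IsPath
  length_le : ∀ ⦃x y : V⦄ (q : G.Walk x y), q.IsPath → q.length ≤ p.length

theorem exists_isLongestPath (G : SimpleGraph V) [Nonempty V] [Finite G.edgeSet] :
    ∃ (u v : V) (p : G.Walk u v), IsLongestPath p := by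
  obtain ⟨u, v, p, hp, hmax⟩ := Walk.exists_isPath_forall_isPath_length_le_length G
  exact ⟨u, v, p, hp, hmax⟩

section Walks

variable {G : SimpleGraph V} {u v : V} {p : G.Walk u v}

namespace IsLongestPath

theorem reverse (hp : IsLongestPath p) : IsLongestPath p.reverse :=
  ⟨hp.isPath.reverse, by simpa only [Walk.length_reverse] using hp.length_le⟩

theorem mem_support_of_adj_start (hp : IsLongestPath p) {w : V} (hw : G.Adj u w) :
    w ∈ p.support := by
  by_contra hmem
  have hlen := hp.length_le _ (hp.isPath.cons hmem (h := hw.symm))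
  simp only [Walk.length_cons] at hlen
  omega

theorem mem_support_of_adj_end (hp : IsLongestPath p) {w : V} (hw : G.Adj v w) :
    w ∈ p.support := by
  simpa using hp.reverse.mem_support_of_adj_start hw

theorem two_le_length [Fintype V] (hp : IsLongestPath p) (hG : G.Preconnected)
    (hV : 2 < Fintype.card V) : 2 ≤ p.length := by
  classical
  by_contra! hlen
  have support_card : p.support.toFinset.card < Fintype.card V := by
    have := p.support.toFinset_card_le
    rw [Walk.length_support] at this
    omega
  obtain ⟨y, -, hy⟩ := Finset.exists_mem_notMem_of_card_lt_card support_card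
  obtain ⟨a, ha, b, hb, hab⟩ := exists_adj_mem_notMem_of_preconnected hG
    (s := {x | x ∈ p.support}) p.start_mem_support (by simpa using hy)
  obtain ⟨i, rfl, hi⟩ := Walk.mem_support_iff_exists_getVert.1 ha
  obtain rfl | rfl : i = 0 ∨ i = p.length := by omega
  · exact hb (hp.mem_support_of_adj_start (by simpa using hab))
  · exact hb (hp.mem_support_of_adj_end (by simpa using hab))

end IsLongestPath

theorem exists_isPath_length_eq_of_isCycle_of_notMem_support (hG : G.Preconnected)
    {c : G.Walk u u} (hc : c.IsCycle) {w : V} (hw : w ∉ c.support) :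
    ∃ (x y : V) (q : G.Walk x y), q.IsPath ∧ q.length = c.length := by
  classical
  obtain ⟨a, ha, b, hb, hab⟩ := exists_adj_mem_notMem_of_preconnected hG
    (s := {x | x ∈ c.support}) c.start_mem_support hw
  let r := c.rotate a ha
  have hr : r.IsCycle := hc.rotate ha
  have hb' : b ∉ r.dropLast.support := fun hmem => by
    rw [Walk.support_dropLast hr.not_nil] at hmem
    exact hb ((c.mem_support_rotate_iff a ha).1 (List.mem_of_mem_dropLast hmem))
  refine ⟨b, r.penultimate, .cons hab.symm r.dropLast, hr.isPath_dropLast.cons hb', ?_⟩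
  rw [Walk.length_cons, Walk.length_dropLast_add_one hr.not_nil, Walk.length_rotate]

theorem IsLongestPath.mem_support_of_isCycle (hp : IsLongestPath p) (hG : G.Preconnected)
    {x : V} {c : G.Walk x x} (hc : c.IsCycle) (hlen : p.length < c.length) (w : V) :
    w ∈ c.support := by
  by_contra hw
  obtain ⟨a, b, q, hq, hqc⟩ :=
    exists_isPath_length_eq_of_isCycle_of_notMem_support hG hc hw
  have := hp.length_le q hq
  omega

/- With `x i = p.getVert i`, the cycle is `x 0, …, x i, v, …, x (i + 1), x 0`: the edge
`x i, x (i + 1)` of `p` is traded for two chords. If `i + 1 = p.length` this just closes up `p`. -/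
theorem exists_isCycle_of_adj_getVert (hp : p.IsPath) (hlen : 2 ≤ p.length) {i : ℕ}
    (hi : i < p.length) (hu : G.Adj u (p.getVert (i + 1))) (hv : G.Adj v (p.getVert i)) :
    ∃ c : G.Walk u u, c.IsCycle ∧ c.length = p.length + 1 := by
  let q : G.Walk u (p.getVert (i + 1)) :=
    (p.take i).append (.cons hv.symm (p.drop (i + 1)).reverse)
  have support_q : q.support = p.support.take (i + 1) ++ (p.support.drop (i + 1)).reverse := by
    simp [q, Walk.support_append, Walk.support_take, Nat.min_eq_left (Nat.succ_le_of_lt hi)]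
  have hq : q.IsPath := by
    rw [Walk.isPath_def, support_q, ((List.reverse_perm _).append_left _).nodup_iff,
      List.take_append_drop]
    exact hp.support_nodup
  have length_q : q.length = p.length := by
    simp only [q, Walk.length_append, Walk.length_cons, Walk.length_reverse, Walk.take_length,
      Walk.drop_length]
    omega
  refine ⟨.cons hu q.reverse, ?_, by simp [length_q]⟩
  rw [Walk.isCycle_iff_isPath_tail_and_le_length, Walk.length_cons, Walk.length_reverse, length_q]
  exact ⟨by simpa using hq, by omega⟩

theorem degree_le_card_filter_adj [DecidableRel G.Adj] {ι : Type*} (s : Finset ι) (f : ι → V)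
    (x : V) [Fintype (G.neighborSet x)] (h : ∀ w, G.Adj x w → ∃ i ∈ s, f i = w) :
    G.degree x ≤ (s.filter fun i => G.Adj x (f i)).card := by
  classical
  rw [← G.card_neighborFinset_eq_degree]
  refine (Finset.card_le_card fun w hw => ?_).trans (Finset.card_image_le (f := f))
  rw [mem_neighborFinset] at hw
  obtain ⟨i, hi, rfl⟩ := h w hw
  exact Finset.mem_image_of_mem f (Finset.mem_filter.2 ⟨hi, hw⟩)

theorem exists_adj_getVert_succ_and_adj_getVert [Fintype (G.neighborSet u)]
    [Fintype (G.neighborSet v)] (hu : ∀ w, G.Adj u w → w ∈ p.support)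
    (hv : ∀ w, G.Adj v w → w ∈ p.support) (hdeg : p.length < G.degree u + G.degree v) :
    ∃ i < p.length, G.Adj u (p.getVert (i + 1)) ∧ G.Adj v (p.getVert i) := by
  classical
  have degree_u := degree_le_card_filter_adj (Finset.range p.length) (fun i => p.getVert (i + 1)) u
    fun w hw => by
      obtain ⟨i, rfl, hi⟩ := Walk.mem_support_iff_exists_getVert.1 (hu w hw)
      have hi0 : i ≠ 0 := by
        rintro rfl
        simp at hw
      exact ⟨i - 1, Finset.mem_range.2 (by omega), by rw [Nat.sub_add_cancel (by omega)]⟩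
  have degree_v := degree_le_card_filter_adj (Finset.range p.length) p.getVert v
    fun w hw => by
      obtain ⟨i, rfl, hi⟩ := Walk.mem_support_iff_exists_getVert.1 (hv w hw)
      have hilen : i ≠ p.length := by
        rintro rfl
        simp at hw
      exact ⟨i, Finset.mem_range.2 (by omega), rfl⟩
  obtain ⟨i, hi⟩ := Finset.inter_nonempty_of_card_lt_card_add_card
    (Finset.filter_subset (fun i => G.Adj u (p.getVert (i + 1))) (Finset.range p.length))
    (Finset.filter_subset (fun i => G.Adj v (p.getVert i)) _)
    (by rw [Finset.card_range]; omega)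
  simp only [Finset.mem_inter, Finset.mem_filter, Finset.mem_range] at hi
  exact ⟨i, hi.1.1, hi.1.2, hi.2.2⟩

theorem IsLongestPath.exists_isCycle [Fintype (G.neighborSet u)]
    [Fintype (G.neighborSet v)] (hp : IsLongestPath p) (hlen : 2 ≤ p.length)
    (hdeg : ¬ G.Adj u v → p.length < G.degree u + G.degree v) :
    ∃ c : G.Walk u u, c.IsCycle ∧ c.length = p.length + 1 := by
  obtain ⟨i, hi, hui, hvi⟩ :
      ∃ i < p.length, G.Adj u (p.getVert (i + 1)) ∧ G.Adj v (p.getVert i) := by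
    by_cases huv : G.Adj u v
    · refine ⟨p.length - 1, by omega, ?_, ?_⟩
      · rwa [Nat.sub_add_cancel (by omega), Walk.getVert_length]
      · exact (p.adj_penultimate (Walk.not_nil_iff_lt_length.2 (by omega))).symm
    · exact exists_adj_getVert_succ_and_adj_getVert (fun w => hp.mem_support_of_adj_start)
        (fun w => hp.mem_support_of_adj_end) (hdeg huv)
  exact exists_isCycle_of_adj_getVert hp.isPath hlen hi hui hvi

theorem isAcyclic_spanningCoe_toSubgraph_of_isPath (hp : p.IsPath) :
    p.toSubgraph.spanningCoe.IsAcyclic := by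
  induction p with
  | nil => exact isAcyclic_bot
  | @cons a b _ hadj q ih =>
    rw [Walk.cons_isPath_iff] at hp
    have spanningCoe_cons : (Walk.cons hadj q).toSubgraph.spanningCoe =
        q.toSubgraph.spanningCoe ⊔ edge a b := by
      rw [Walk.toSubgraph, Subgraph.sup_spanningCoe, Subgraph.spanningCoe_subgraphOfAdj,
        sup_comm, edge]
    rw [spanningCoe_cons]
    refine (ih hp.1).sup_edge_of_not_reachable fun ⟨r⟩ => ?_
    cases r with
    | nil => exact G.irrefl hadj
    | cons h _ => exact hp.2 (q.mem_verts_toSubgraph.1 h.fst_mem)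

theorem exists_isSpanning_isTree_toSubgraph_le (hG : G.Connected) (hp : p.IsPath) :
    ∃ H : G.Subgraph, H.IsSpanning ∧ H.coe.IsTree ∧ p.toSubgraph ≤ H := by
  obtain ⟨T, hpT, hTG, hT⟩ := hG.exists_isTree_le_of_le_of_isAcyclic
    p.toSubgraph.spanningCoe_le (isAcyclic_spanningCoe_toSubgraph_of_isPath hp)
  have hspan := toSubgraph.isSpanning T hTG
  refine ⟨toSubgraph T hTG, hspan, ?_, ⟨fun x _ => hspan x, fun _ _ hadj => hpT hadj⟩⟩
  exact ((toSubgraph T hTG).spanningCoeEquivCoeOfSpanning hspan).isTree_iff.1 hT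

theorem endVertexCount_add_length_le [Fintype V] (hp : p.IsPath) {H : G.Subgraph}
    (hpH : p.toSubgraph ≤ H) : endVertexCount H + p.length ≤ Fintype.card V + 1 := by
  have card_interior : (p.getVert '' Set.Ioo 0 p.length).ncard = p.length - 1 := by
    rw [(hp.getVert_injOn.mono fun i hi => hi.2.le).ncard_image]
    simp
  have hdisj : Disjoint {x | x ∈ H.verts ∧ (H.neighborSet x).ncard = 1}
      (p.getVert '' Set.Ioo 0 p.length) := by
    rw [Set.disjoint_left]
    rintro _ ⟨-, hx⟩ ⟨i, ⟨hi0, hi⟩, rfl⟩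
    have hle := Set.ncard_le_ncard (Subgraph.neighborSet_subset_of_subgraph hpH (p.getVert i))
    rw [hp.ncard_neighborSet_toSubgraph_internal_eq_two hi0.ne' hi] at hle
    omega
  have hcard := Set.ncard_le_card ({x | x ∈ H.verts ∧ (H.neighborSet x).ncard = 1} ∪
      p.getVert '' Set.Ioo 0 p.length)
  rw [Set.ncard_union_eq hdisj, card_interior, Nat.card_eq_fintype_card] at hcard
  unfold endVertexCount
  omega

theorem isCycleSubgraph_toSubgraph_of_isCycle {c : G.Walk u u} (hc : c.IsCycle) :
    IsCycleSubgraph c.toSubgraph :=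
  ⟨c.toSubgraph_connected, .inr fun _ hx =>
    hc.ncard_neighborSet_toSubgraph_eq_two (c.mem_verts_toSubgraph.1 hx)⟩

end Walks

theorem isCycleSubgraph_top [Fintype V] {G : SimpleGraph V} (hG : G.Connected)
    (hV : Fintype.card V ≤ 2) : IsCycleSubgraph (⊤ : G.Subgraph) :=
  ⟨Subgraph.connected_iff'.2 (Subgraph.topIso.connected_iff.2 hG),
    .inl (by simpa [Set.ncard_univ] using hV)⟩

theorem isIndSet_pair {G : SimpleGraph V} {u v : V} (huv : ¬ G.Adj u v) : IsIndSet G {u, v} := by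
  rintro x (rfl | rfl) y (rfl | rfl) hxy
  exacts [G.irrefl hxy, huv hxy, huv hxy.symm, G.irrefl hxy]

theorem minDegreeSum_two_le [Fintype V] {G : SimpleGraph V} [DecidableRel G.Adj] {u v : V}
    (hne : u ≠ v) (huv : ¬ G.Adj u v) : minDegreeSum G 2 ≤ (G.degree u + G.degree v : ℕ) := by
  classical
  rw [Nat.cast_add, ← Finset.sum_pair (f := fun x => (G.degree x : ℕ∞)) hne]
  exact iInf₂_le _ ⟨Finset.card_pair hne, by simpa using isIndSet_pair huv⟩

/-- **Corollary 7.** If `G` is connected of order `n` and `σ_2 ≥ n - k + 1` for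
some positive integer `k`, then `G` has a spanning `k`-ended tree. -/
theorem corollary7 [Fintype V] (G : SimpleGraph V) [DecidableRel G.Adj]
    (hG : G.Connected) (k : ℕ) (hk : 1 ≤ k)
    (h : (Fintype.card V : ℕ∞) + 1 ≤ minDegreeSum G 2 + (k : ℕ∞)) :
    ∃ H : G.Subgraph, H.IsSpanning ∧ IsKEndedTree G k H := by
  rcases le_or_gt (Fintype.card V) 2 with hV | hV
  · exact ⟨⊤, fun _ => trivial, .inr ⟨hk, isCycleSubgraph_top hG hV⟩⟩
  have := hG.nonempty
  obtain ⟨u, v, p, hp⟩ := exists_isLongestPath G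
  rcases le_or_gt (p.length + k) (Fintype.card V) with hshort | hlong
  · have hlen : 2 ≤ p.length := hp.two_le_length hG.preconnected hV
    have hne : u ≠ v := hp.isPath.nil_iff_eq.not.1 (Walk.not_nil_iff_lt_length.2 (by omega))
    have hdeg (huv : ¬ G.Adj u v) : p.length < G.degree u + G.degree v := by
      have : Fintype.card V + 1 ≤ G.degree u + G.degree v + k := by
        exact_mod_cast h.trans (add_le_add_left (minDegreeSum_two_le hne huv) _)
      omega
    obtain ⟨c, hc, hclen⟩ := hp.exists_isCycle hlen hdeg
    refine ⟨c.toSubgraph, fun w => ?_, .inr ⟨hk, isCycleSubgraph_toSubgraph_of_isCycle hc⟩⟩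
    exact c.mem_verts_toSubgraph.2 (hp.mem_support_of_isCycle hG.preconnected hc (by omega) w)
  · obtain ⟨H, hspan, htree, hpH⟩ := exists_isSpanning_isTree_toSubgraph_le hG hp.isPath
    have := endVertexCount_add_length_le hp.isPath hpH
    exact ⟨H, hspan, .inl ⟨htree, by omega⟩⟩
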